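/- arXiv:1801.10072 — 2 statements merged into one kernel-verified Lean document; each statement's English description precedes it below -/
import Mathlib

section
/- Klein's theorem for the upper sail: let ω > 0 be an irrational real number with continued fraction expansion ω = [a₀; a₁, a₂, …] and convergents pₖ/qₖ. Then the set of extreme points of the convex hull of the set S = {(x, y) ∈ ℤ² : x ≥ 0, y ≥ ωx, (x, y) ≠ (0, 0)} is exactly {(0, 1)} ∪ {(q₂ₖ₊₁, p₂ₖ₊₁) : k ≥ 0}, i.e. the sail vertices of the angle between the ray y = ωx (x > 0) and the positive y-axis are the odd-index convergents. -/
/-- `a` is the sequence of partial quotients of the (regular) continued fraction expansion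
`ω = [a₀; a₁, a₂, …]`: there is a sequence of complete quotients `w` with `w 0 = ω`,
`aₙ = ⌊wₙ⌋` and `wₙ₊₁ = 1/(wₙ − aₙ)`. -/
def IsCFExpansion (ω : ℝ) (a : ℕ → ℤ) : Prop :=
  ∃ w : ℕ → ℝ, w 0 = ω ∧ ∀ n, a n = ⌊w n⌋ ∧ w (n + 1) = 1 / (w n - (a n : ℝ))

/-- `p k / q k` are the convergents of the continued fraction with partial quotients `a`:
`p₋₁ = 1, q₋₁ = 0, p₋₂ = 0, q₋₂ = 1` and `pₖ = aₖpₖ₋₁ + pₖ₋₂`, `qₖ = aₖqₖ₋₁ + qₖ₋₂`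
(spelled out for `k = 0, 1` to avoid negative indices). -/
def IsConvergents (a : ℕ → ℤ) (p q : ℕ → ℤ) : Prop :=
  p 0 = a 0 ∧ q 0 = 1 ∧ p 1 = a 1 * a 0 + 1 ∧ q 1 = a 1 ∧
    ∀ k : ℕ, p (k + 2) = a (k + 2) * p (k + 1) + p k ∧
      q (k + 2) = a (k + 2) * q (k + 1) + q k

def kleinS (ω : ℝ) : Set (ℝ × ℝ) := {v : ℝ × ℝ | ∃ x y : ℤ,
        v = ((x : ℝ), (y : ℝ)) ∧ 0 ≤ x ∧ ω * (x : ℝ) ≤ (y : ℝ) ∧ (x, y) ≠ ((0 : ℤ), (0 : ℤ))}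

lemma klein_mem {ω : ℝ} {x y : ℤ} (hx : 0 ≤ x) (h : 0 < (y : ℝ) - ω * x) :
    ((x : ℝ), (y : ℝ)) ∈ kleinS ω := by
  refine ⟨x, y, rfl, hx, by linarith, ?_⟩
  intro h0
  simp only [Prod.mk.injEq] at h0
  obtain ⟨rfl, rfl⟩ := h0
  simp at h

lemma klein_pos {ω : ℝ} (hirr : Irrational ω) {x y : ℤ} (h : ω * (x : ℝ) ≤ (y : ℝ))
    (h0 : (x, y) ≠ ((0 : ℤ), (0 : ℤ))) : 0 < (y : ℝ) - ω * x := by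
  rcases h.lt_or_eq with h1 | h1
  · linarith
  · exfalso
    by_cases hx : x = 0
    · subst hx
      apply h0
      have : (y : ℝ) = 0 := by rw [← h1]; simp
      have : y = 0 := by exact_mod_cast this
      simp [this]
    · exact (hirr.mul_intCast hx).ne_int y h1

lemma klein_mid {A : Set (ℝ × ℝ)} {x y i j : ℝ} (hij : i ≠ 0 ∨ j ≠ 0)
    (h1 : (x + i, y + j) ∈ A) (h2 : (x - i, y - j) ∈ A) :
    (x, y) ∉ Set.extremePoints ℝ A := by
  intro h
  rw [mem_extremePoints] at h
  have := (h.2 _ h1 _ h2 ⟨1/2, 1/2, by norm_num, by norm_num, by norm_num, by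
    ext
    · simp; ring
    · simp; ring⟩).1
  simp only [Prod.mk.injEq] at this
  rcases hij with h | h
  · exact h (by linarith [this.1])
  · exact h (by linarith [this.2])

lemma klein_half {S : Set (ℝ × ℝ)} (A B c : ℝ) (h : ∀ z ∈ S, c ≤ A * z.2 - B * z.1) :
    ∀ z ∈ convexHull ℝ S, c ≤ A * z.2 - B * z.1 := by
  have hc : Convex ℝ {z : ℝ × ℝ | c ≤ A * z.2 - B * z.1} := by
    intro x hx y hy s t hs ht hst
    simp only [Set.mem_ofPred_eq, Prod.snd_add, Prod.fst_add, Prod.smul_fst, Prod.smul_snd,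
      smul_eq_mul] at *
    have e : c = s * c + t * c := by rw [← add_mul, hst, one_mul]
    nlinarith [mul_le_mul_of_nonneg_left hx hs, mul_le_mul_of_nonneg_left hy ht]
  exact fun z hz => convexHull_min h hc hz

lemma klein_ext {K : Set (ℝ × ℝ)} {x y : ℝ} (hm : (x, y) ∈ K) (A B c A' B' c' : ℝ)
    (h : ∀ z ∈ K, c ≤ A * z.2 - B * z.1) (h' : ∀ z ∈ K, c' ≤ A' * z.2 - B' * z.1)
    (e : A * y - B * x = c) (e' : A' * y - B' * x = c') (hd : A * B' - B * A' ≠ 0) :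
    (x, y) ∈ Set.extremePoints ℝ K := by
  refine ⟨hm, ?_⟩
  rintro z1 hz1 z2 hz2 ⟨s, t, hs, ht, hst, hz⟩
  simp only [Prod.ext_iff, Prod.snd_add, Prod.fst_add, Prod.smul_fst, Prod.smul_snd,
      smul_eq_mul] at hz
  obtain ⟨hx, hy⟩ := hz
  have key : ∀ A B c : ℝ, c ≤ A * z1.2 - B * z1.1 → c ≤ A * z2.2 - B * z2.1 →
      A * y - B * x = c → A * z1.2 - B * z1.1 = c := by
    intro A B c h1 h2 e
    rw [← hx, ← hy] at e
    have e2 : s * (A * z1.2 - B * z1.1 - c) + t * (A * z2.2 - B * z2.1 - c) = 0 := by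
      have : t = 1 - s := by linarith
      subst this
      linarith
    have h3 := mul_nonneg ht.le (sub_nonneg.2 h2)
    have h4 := mul_nonneg hs.le (sub_nonneg.2 h1)
    have h5 : s * (A * z1.2 - B * z1.1 - c) = 0 := by linarith
    rcases mul_eq_zero.1 h5 with h6 | h6 <;> linarith
  have k1 := key A B c (h _ hz1) (h _ hz2) e
  have k2 := key A' B' c' (h' _ hz1) (h' _ hz2) e'
  ext
  · apply mul_left_cancel₀ hd
    linear_combination A' * k1 - A * k2 - A' * e + A * e'
  · apply mul_left_cancel₀ hd
    linear_combination B' * k1 - B * k2 - B' * e + B * e'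

lemma klein_sum {ω : ℝ} {x y x' y' : ℤ} (hx : 0 ≤ x) (h : 0 < (y : ℝ) - ω * x)
    (hx' : 0 ≤ x') (h' : 0 < (y' : ℝ) - ω * x') :
    (((x + x' : ℤ) : ℝ), ((y + y' : ℤ) : ℝ)) ∉
      Set.extremePoints ℝ (convexHull ℝ (kleinS ω)) := by
  by_cases hne : x = x' ∧ y = y'
  · obtain ⟨rfl, rfl⟩ := hne
    have m1 : (((3 * x : ℤ) : ℝ), ((3 * y : ℤ) : ℝ)) ∈ kleinS ω :=
      klein_mem (by omega) (by push_cast; linarith)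
    have m2 := klein_mem hx h
    apply klein_mid (i := x) (j := y)
    · by_contra! hc
      rw [hc.1, hc.2] at h
      simp at h
    · convert subset_convexHull ℝ _ m1 using 2 <;> push_cast <;> ring
    · convert subset_convexHull ℝ _ m2 using 2 <;> push_cast <;> ring
  · have m1 : (((2 * x : ℤ) : ℝ), ((2 * y : ℤ) : ℝ)) ∈ kleinS ω :=
      klein_mem (by omega) (by push_cast; linarith)
    have m2 : (((2 * x' : ℤ) : ℝ), ((2 * y' : ℤ) : ℝ)) ∈ kleinS ω :=
      klein_mem (by omega) (by push_cast; linarith)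
    apply klein_mid (i := x - x') (j := y - y')
    · by_contra! hc
      apply hne
      constructor
      · exact_mod_cast (sub_eq_zero.1 hc.1)
      · exact_mod_cast (sub_eq_zero.1 hc.2)
    · convert subset_convexHull ℝ _ m1 using 2 <;> push_cast <;> ring
    · convert subset_convexHull ℝ _ m2 using 2 <;> push_cast <;> ring

theorem klein_abstract (ω : ℝ) (hirr : Irrational ω)
    (vx vy dx dy b c : ℕ → ℤ) (hvx0 : vx 0 = 0) (hvy0 : vy 0 = 1) (hdx0 : dx 0 = 1)
    (hvx : ∀ k, vx (k + 1) = vx k + b k * dx k) (hvy : ∀ k, vy (k + 1) = vy k + b k * dy k)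
    (hdx : ∀ k, dx (k + 1) = dx k + c k * vx (k + 1))
    (hdy : ∀ k, dy (k + 1) = dy k + c k * vy (k + 1))
    (hb : ∀ k, 1 ≤ b k) (hc : ∀ k, 1 ≤ c k)
    (hLv : ∀ k, 0 < (vy k : ℝ) - ω * vx k) (hLd : ∀ k, (dy k : ℝ) - ω * dx k < 0) :
    Set.extremePoints ℝ (convexHull ℝ (kleinS ω)) =
      {v : ℝ × ℝ | ∃ k : ℕ, v = ((vx k : ℝ), (vy k : ℝ))} := by
  have hpos : ∀ k, 0 ≤ vx k ∧ 1 ≤ dx k := by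
    intro k
    induction k with
    | zero => simp [hvx0, hdx0]
    | succ k ih =>
      have h1 : 0 ≤ vx (k + 1) := by
        rw [hvx]; nlinarith [hb k, ih.1, ih.2]
      refine ⟨h1, ?_⟩
      rw [hdx]; nlinarith [hc k, ih.2]
  have hdet : ∀ k, dx k * vy k - dy k * vx k = 1 := by
    intro k
    induction k with
    | zero => simp [hvx0, hdx0, hvy0]
    | succ k ih =>
      rw [hdx, hdy, hvx, hvy]
      linear_combination ih
  have hf : ∀ k, ∀ x y : ℤ, 0 ≤ x → 0 < (y : ℝ) - ω * x → 1 ≤ dx k * y - dy k * x := by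
    intro k x y hx h
    have h1 : (1 : ℝ) ≤ dx k := by exact_mod_cast (hpos k).2
    have h2 : (0 : ℝ) ≤ x := by exact_mod_cast hx
    have h3 : (0 : ℝ) < dx k * y - dy k * x := by
      nlinarith [mul_nonneg h2 (sub_nonneg.2 (hLd k).le), mul_pos (by linarith : (0:ℝ) < dx k) h]
    have h4 : 0 < dx k * y - dy k * x := by exact_mod_cast h3
    omega
  have hS : ∀ k, ∀ z ∈ convexHull ℝ (kleinS ω), (1 : ℝ) ≤ (dx k : ℝ) * z.2 - (dy k : ℝ) * z.1 := by
    intro k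
    apply klein_half
    rintro z ⟨x, y, rfl, hx, h, h0⟩
    have := hf k x y hx (klein_pos hirr h h0)
    simp only
    exact_mod_cast this
  have hX : ∀ z ∈ convexHull ℝ (kleinS ω), (0 : ℝ) ≤ (0 : ℝ) * z.2 - (-1 : ℝ) * z.1 := by
    apply klein_half
    rintro z ⟨x, y, rfl, hx, h, h0⟩
    have : (0 : ℝ) ≤ x := by exact_mod_cast hx
    simpa using this
  have hvm : ∀ k, ((vx k : ℝ), (vy k : ℝ)) ∈ convexHull ℝ (kleinS ω) := fun k =>
    subset_convexHull ℝ _ (klein_mem (hpos k).1 (hLv k))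
  ext z
  constructor
  · intro hz
    obtain ⟨x, y, rfl, hx, h, h0⟩ := extremePoints_convexHull_subset hz
    have hL := klein_pos hirr h h0
    have main : ∀ n : ℕ, ∀ k, x * vy k - y * vx k = n →
        ∃ k : ℕ, ((x : ℝ), (y : ℝ)) = ((vx k : ℝ), (vy k : ℝ)) := by
      intro n
      induction n using Nat.strong_induction_on with
      | _ n ih =>
      intro k hk
      have hfk := hf k x y hx hL
      obtain ⟨f, hfdef⟩ : ∃ f, f = dx k * y - dy k * x := ⟨_, rfl⟩
      rw [← hfdef] at hfk
      have hx1 : x = n * dx k + f * vx k := by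
        linear_combination (-x) * hdet k + dx k * hk - vx k * hfdef
      have hy1 : y = n * dy k + f * vy k := by
        linear_combination (-y) * hdet k + dy k * hk - vy k * hfdef
      have hα : x * vy (k + 1) - y * vx (k + 1) = n - b k * f := by
        rw [hvx, hvy]
        linear_combination hk + b k * hfdef
      by_cases hge : 0 ≤ (n : ℤ) - b k * f
      · obtain ⟨m, hm⟩ := Int.eq_ofNat_of_zero_le hge
        have : 1 ≤ b k * f := by nlinarith [hb k]
        exact ih m (by omega) (k + 1) (by rw [hα, hm])
      · push Not at hge
        have hvp := (hpos k).1
        have hdp := (hpos k).2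
        have hLv0 := hLv k
        have hLd0 := hLd k
        have hLv1 := hLv (k + 1)
        rw [hvx, hvy] at hLv1
        push_cast at hLv1
        have hn0 : (0 : ℤ) ≤ n := Int.natCast_nonneg n
        -- points `i d + g v`
        have hmem : ∀ i g : ℤ, 0 ≤ i → 1 ≤ g → i ≤ b k * g →
            0 ≤ i * dx k + g * vx k ∧
              0 < ((i * dy k + g * vy k : ℤ) : ℝ) - ω * (i * dx k + g * vx k : ℤ) := by
          intro i g hi hg hig
          refine ⟨by positivity, ?_⟩
          have hg' : (1 : ℝ) ≤ g := by exact_mod_cast hg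
          have hig' : (i : ℝ) ≤ b k * g := by exact_mod_cast hig
          push_cast
          nlinarith [mul_pos (by linarith : (0 : ℝ) < g) hLv1,
            mul_nonneg (sub_nonneg.2 hig') (sub_nonneg.2 hLd0.le)]
        by_cases hf1 : f = 1
        · subst hf1
          by_cases hn : n = 0
          · subst hn
            refine ⟨k, ?_⟩
            simp at hx1 hy1
            rw [hx1, hy1]
          · exfalso
            have m1 := hmem (n + 1) 1 (by omega) le_rfl (by omega)
            have m2 := hmem (n - 1) 1 (by omega) le_rfl (by omega)
            have m1' := subset_convexHull ℝ _ (klein_mem m1.1 m1.2)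
            have m2' := subset_convexHull ℝ _ (klein_mem m2.1 m2.2)
            refine klein_mid (i := dx k) (j := dy k) ?_ ?_ ?_ hz
            · left
              have : dx k ≠ 0 := by omega
              exact_mod_cast this
            · convert m1' using 2 <;> rw [← Int.cast_add] <;> congr 1
              · rw [hx1]; ring
              · rw [hy1]; ring
            · convert m2' using 2 <;> rw [← Int.cast_sub] <;> congr 1
              · rw [hx1]; ring
              · rw [hy1]; ring
        · exfalso
          have hf2 : 2 ≤ f := by omega
          have hbk := hb k
          obtain ⟨i, hi0, hib, hi1, hi2⟩ : ∃ i : ℤ, 0 ≤ i ∧ i ≤ b k * 1 ∧ 0 ≤ n - i ∧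
              n - i ≤ b k * (f - 1) := by
            rcases le_total (n : ℤ) (b k) with h | h
            · exact ⟨n, hn0, by omega, by omega, by nlinarith⟩
            · exact ⟨b k, by omega, by omega, by omega, by nlinarith⟩
          have m1 := hmem i 1 hi0 le_rfl hib
          have m2 := hmem (n - i) (f - 1) hi1 (by omega) hi2
          apply klein_sum m1.1 m1.2 m2.1 m2.2
          convert hz using 3
          · rw [hx1]; ring
          · rw [hy1]; ring
    have hx0 : x * vy 0 - y * vx 0 = x.toNat := by
      rw [hvx0, hvy0]; simp [hx]
    exact main _ 0 hx0
  · rintro ⟨k, rfl⟩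
    rcases k with _ | k
    · refine klein_ext (hvm 0) _ _ _ _ _ _ (hS 0) hX ?_ ?_ ?_
      · exact_mod_cast hdet 0
      · simp [hvx0]
      · simp [hdx0]
    · refine klein_ext (hvm (k + 1)) _ _ _ _ _ _ (hS k) (hS (k + 1)) ?_ ?_ ?_
      · have : dx k * vy (k + 1) - dy k * vx (k + 1) = 1 := by
          rw [hvx, hvy]; linear_combination hdet k
        exact_mod_cast this
      · exact_mod_cast hdet (k + 1)
      · have : dx k * dy (k + 1) - dy k * dx (k + 1) = c k := by
          rw [hdx, hdy, hvx, hvy]; linear_combination c k * hdet k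
        have h2 : dx k * dy (k + 1) - dy k * dx (k + 1) ≠ 0 := by
          rw [this]; have := hc k; omega
        exact_mod_cast h2

/-- Klein's theorem for the upper sail: for irrational `ω > 0`, the extreme points of the
convex hull of `S = {(x, y) ∈ ℤ² : x ≥ 0, y ≥ ωx, (x, y) ≠ (0, 0)}` are exactly `(0, 1)`
together with the odd-index convergents `(q₂ₖ₊₁, p₂ₖ₊₁)`. -/
theorem klein_upper_sail (ω : ℝ) (hω : 0 < ω) (hirr : Irrational ω)
    (a p q : ℕ → ℤ) (hcf : IsCFExpansion ω a) (hconv : IsConvergents a p q) :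
    Set.extremePoints ℝ (convexHull ℝ {v : ℝ × ℝ | ∃ x y : ℤ,
        v = ((x : ℝ), (y : ℝ)) ∧ 0 ≤ x ∧ ω * (x : ℝ) ≤ (y : ℝ) ∧ (x, y) ≠ ((0 : ℤ), (0 : ℤ))}) =
      {((0 : ℝ), (1 : ℝ))} ∪
        {v : ℝ × ℝ | ∃ k : ℕ, v = ((q (2 * k + 1) : ℝ), (p (2 * k + 1) : ℝ))} := by
  obtain ⟨w, hw0, hw⟩ := hcf
  obtain ⟨hp0, hq0, hp1, hq1, hrec⟩ := hconv
  have hwirr : ∀ n, Irrational (w n) := by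
    intro n
    induction n with
    | zero => rw [hw0]; exact hirr
    | succ n ih =>
      rw [(hw n).2, one_div]
      exact (ih.sub_intCast (a n)).inv
  have hfr : ∀ n, 0 < w n - a n ∧ w n - a n < 1 := by
    intro n
    have h1 := Int.floor_le (w n)
    have h2 := Int.lt_floor_add_one (w n)
    rw [← (hw n).1] at h1 h2
    have h3 : w n ≠ a n := (hwirr n).ne_int (a n)
    exact ⟨sub_pos.2 (lt_of_le_of_ne h1 h3.symm), by linarith⟩
  have hw1 : ∀ n, 1 < w (n + 1) := by
    intro n
    rw [(hw n).2]
    exact (one_lt_div (hfr n).1).2 (hfr n).2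
  have ha : ∀ n, 1 ≤ a (n + 1) := by
    intro n
    rw [(hw (n + 1)).1]
    exact Int.le_floor.2 (by exact_mod_cast (hw1 n).le)
  have hmul : ∀ n, w (n + 1) * (w n - a n) = 1 := by
    intro n
    rw [(hw n).2]
    exact one_div_mul_cancel (hfr n).1.ne'
  have hstep : ∀ n, (p (n + 1) : ℝ) - ω * q (n + 1)
      = -(w (n + 1) - a (n + 1)) * (p n - ω * q n) := by
    intro n
    induction n with
    | zero =>
      rw [hp0, hq0, hp1, hq1]
      have := hmul 0
      rw [hw0] at this
      push_cast
      linear_combination (-1 : ℝ) * this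
    | succ n ih =>
      rw [(hrec n).1, (hrec n).2]
      push_cast
      have h := hmul (n + 1)
      linear_combination w (n + 1 + 1) * ih - ((p n : ℝ) - ω * q n) * h
  have hsign : ∀ k, (p (2 * k) : ℝ) - ω * q (2 * k) < 0 ∧
      0 < (p (2 * k + 1) : ℝ) - ω * q (2 * k + 1) := by
    have hodd : ∀ n, (p n : ℝ) - ω * q n < 0 → 0 < (p (n + 1) : ℝ) - ω * q (n + 1) := by
      intro n h
      rw [hstep]
      nlinarith [mul_pos (hfr (n + 1)).1 (neg_pos.2 h)]
    have heven : ∀ n, 0 < (p n : ℝ) - ω * q n → (p (n + 1) : ℝ) - ω * q (n + 1) < 0 := by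
      intro n h
      rw [hstep]
      nlinarith [mul_pos (hfr (n + 1)).1 h]
    intro k
    induction k with
    | zero =>
      have h0 : (p 0 : ℝ) - ω * q 0 < 0 := by
        rw [hp0, hq0]
        have := (hfr 0).1
        rw [hw0] at this
        push_cast
        linarith
      exact ⟨h0, hodd 0 h0⟩
    | succ k ih =>
      have h1 := heven _ ih.2
      exact ⟨h1, hodd _ h1⟩
  have habs := klein_abstract ω hirr
    (fun k => Nat.casesOn k 0 (fun j => q (2 * j + 1)))
    (fun k => Nat.casesOn k 1 (fun j => p (2 * j + 1)))
    (fun k => q (2 * k)) (fun k => p (2 * k))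
    (fun k => a (2 * k + 1)) (fun k => a (2 * k + 2)) rfl rfl hq0
    (by
      rintro (_ | k)
      · simp [hq0, hq1]
      · have := (hrec (2 * k + 1)).2
        simp only [Nat.mul_add] at *
        linarith)
    (by
      rintro (_ | k)
      · simp [hp0, hp1]; ring
      · have := (hrec (2 * k + 1)).1
        simp only [Nat.mul_add] at *
        linarith)
    (by
      intro k
      have := (hrec (2 * k)).2
      simp only [Nat.mul_add] at *
      linarith)
    (by
      intro k
      have := (hrec (2 * k)).1
      simp only [Nat.mul_add] at *
      linarith)
    (fun k => ha _) (fun k => ha _)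
    (by
      rintro (_ | k)
      · simp
      · exact (hsign k).2)
    (fun k => (hsign k).1)
  refine Eq.trans habs ?_
  ext z
  constructor
  · rintro ⟨_ | k, rfl⟩
    · left; simp
    · right; exact ⟨k, rfl⟩
  · rintro (h | ⟨k, rfl⟩)
    · refine ⟨0, ?_⟩
      rw [Set.mem_singleton_iff.1 h]
      simp
    · exact ⟨k + 1, rfl⟩
end

section
/- Edge–angle duality between the two Klein sails (Karpenkov): let ω > 1 be irrational with continued fraction expansion ω = [a₀; a₁, a₂, …] and convergents pₖ/qₖ. Define A₋₁ = (1, 0), Aₖ = (q₂ₖ, p₂ₖ) for k ≥ 0 (vertices of the sail of the angle between the x-axis and the ω-ray) and B₋₁ = (0, 1), Bₖ = (q₂ₖ₊₁, p₂ₖ₊₁) for k ≥ 0 (vertices of the sail of the angle between the ω-ray and the y-axis). Then for every k ≥ 0: lsin∠Aₖ₋₁AₖAₖ₊₁ = ll(Bₖ₋₁Bₖ), and lsin∠Bₖ₋₁BₖBₖ₊₁ = ll(AₖAₖ₊₁). -/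
/-- The integer length of the segment `PQ` between two lattice points: the number of lattice
points in the open segment plus one, equivalently the gcd of the coordinates of `Q - P`. -/
def llen (P Q : ℤ × ℤ) : ℕ := Int.gcd (Q.1 - P.1) (Q.2 - P.2)

/-- The determinant of the 2×2 matrix with columns `u` and `v`. -/
def det2 (u v : ℤ × ℤ) : ℤ := u.1 * v.2 - u.2 * v.1

/-- The integer sine of the angle `∠ABC`. -/
noncomputable def lsin (A B C : ℤ × ℤ) : ℚ :=
  (|det2 (A - B) (C - B)| : ℚ) / ((llen A B : ℚ) * (llen B C : ℚ))

lemma cf_pos (ω : ℝ) (hω : 1 < ω) (hirr : Irrational ω) (a : ℕ → ℤ)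
    (hcf : IsCFExpansion ω a) : ∀ n, 0 < a n := by
  obtain ⟨w, h0, hw⟩ := hcf
  have key : ∀ n, 1 < w n ∧ Irrational (w n) := by
    intro n
    induction n with
    | zero => rw [h0]; exact ⟨hω, hirr⟩
    | succ n ih =>
      obtain ⟨h1, h2⟩ := ih
      obtain ⟨ha, hs⟩ := hw n
      have hirr' : Irrational (w n - (a n : ℝ)) := h2.sub_intCast (a n)
      have hle : (a n : ℝ) ≤ w n := by rw [ha]; exact Int.floor_le _
      have hlt : w n < (a n : ℝ) + 1 := by rw [ha]; exact Int.lt_floor_add_one _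
      have hne : w n - (a n : ℝ) ≠ 0 := hirr'.ne_zero
      have hpos : 0 < w n - (a n : ℝ) := lt_of_le_of_ne (by linarith) hne.symm
      rw [hs]
      refine ⟨?_, ?_⟩
      · rw [lt_div_iff₀ hpos]; linarith
      · rw [one_div]; exact hirr'.inv
  intro n
  rw [(hw n).1]
  exact Int.floor_pos.mpr (key n).1.le

lemma llen_eq (X Y U W : ℤ × ℤ) (m : ℤ) (hm : 0 < m)
    (h1 : Y.1 - X.1 = m * U.1) (h2 : Y.2 - X.2 = m * U.2) (hd : det2 U W ^ 2 = 1) :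
    (llen X Y : ℚ) = (m : ℚ) := by
  have hg : Int.gcd U.1 U.2 = 1 := by
    rw [← Int.isCoprime_iff_gcd_eq_one]
    refine ⟨det2 U W * W.2, -(det2 U W * W.1), ?_⟩
    rw [← hd]; unfold det2; ring
  unfold llen
  rw [h1, h2, Int.gcd_mul_left, hg, mul_one]
  have : ((m.natAbs : ℤ) : ℚ) = (m : ℚ) := by rw [Int.natAbs_of_nonneg hm.le]
  rw [← this, Int.cast_natCast]

lemma lsin_eq (X Y Z U V W : ℤ × ℤ) (m n c : ℤ) (hm : 0 < m) (hn : 0 < n) (hc : 0 < c)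
    (h1 : Y.1 - X.1 = m * U.1) (h2 : Y.2 - X.2 = m * U.2)
    (h3 : Z.1 - Y.1 = n * V.1) (h4 : Z.2 - Y.2 = n * V.2)
    (h5 : V.1 - U.1 = c * W.1) (h6 : V.2 - U.2 = c * W.2)
    (hd : det2 U W ^ 2 = 1) :
    lsin X Y Z = (llen U V : ℚ) := by
  have hV1 : V.1 = U.1 + c * W.1 := by linarith
  have hV2 : V.2 = U.2 + c * W.2 := by linarith
  have hdV : det2 V W ^ 2 = 1 := by
    rw [← hd]; unfold det2; rw [hV1, hV2]; ring
  have hdW : det2 W U ^ 2 = 1 := by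
    rw [← hd]; unfold det2; ring
  have hdet : det2 (X - Y) (Z - Y) = -(m * n * c * det2 U W) := by
    have e1 : X.1 - Y.1 = -(m * U.1) := by linarith
    have e2 : X.2 - Y.2 = -(m * U.2) := by linarith
    unfold det2
    simp only [Prod.fst_sub, Prod.snd_sub]
    rw [e1, e2, h3, h4, hV1, hV2]; ring
  have habs : |det2 U W| = 1 := by
    have h := (sq_eq_sq_iff_abs_eq_abs (det2 U W) 1).mp (by rw [hd]; norm_num)
    simpa using h
  have habs2 : |det2 (X - Y) (Z - Y)| = m * n * c := by
    rw [hdet, abs_neg, abs_mul, habs, mul_one, abs_of_pos (by positivity)]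
  unfold lsin
  rw [llen_eq X Y U W m hm h1 h2 hd, llen_eq Y Z V W n hn h3 h4 hdV,
    llen_eq U V W U c hc h5 h6 hdW]
  have hm' : (m : ℚ) ≠ 0 := by exact_mod_cast hm.ne'
  have hn' : (n : ℚ) ≠ 0 := by exact_mod_cast hn.ne'
  rw [← Int.cast_abs, habs2]
  push_cast
  field_simp

/-- Edge–angle duality between the two Klein sails (Karpenkov): with sail vertices
`A₋₁ = (1,0)`, `Aₖ = (q₂ₖ, p₂ₖ)` of the lower sail and `B₋₁ = (0,1)`, `Bₖ = (q₂ₖ₊₁, p₂ₖ₊₁)`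
of the upper sail (here `A (k+1)`, `B (k+1)` stand for `Aₖ`, `Bₖ`), for every `k ≥ 0`:
`lsin∠Aₖ₋₁AₖAₖ₊₁ = ll(Bₖ₋₁Bₖ)` and `lsin∠Bₖ₋₁BₖBₖ₊₁ = ll(AₖAₖ₊₁)`. -/
theorem edge_angle_duality (ω : ℝ) (hω : 1 < ω) (hirr : Irrational ω)
    (a p q : ℕ → ℤ) (hcf : IsCFExpansion ω a) (hconv : IsConvergents a p q)
    (A B : ℕ → ℤ × ℤ) (hA0 : A 0 = (1, 0)) (hB0 : B 0 = (0, 1))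
    (hA : ∀ k : ℕ, A (k + 1) = (q (2 * k), p (2 * k)))
    (hB : ∀ k : ℕ, B (k + 1) = (q (2 * k + 1), p (2 * k + 1))) :
    ∀ k : ℕ, lsin (A k) (A (k + 1)) (A (k + 2)) = (llen (B k) (B (k + 1)) : ℚ) ∧
      lsin (B k) (B (k + 1)) (B (k + 2)) = (llen (A (k + 1)) (A (k + 2)) : ℚ) := by
  have ha := cf_pos ω hω hirr a hcf
  obtain ⟨hp0, hq0, hp1, hq1, hrec⟩ := hconv
  have stepA : ∀ k, (A (k + 1)).1 - (A k).1 = a (2 * k) * (B k).1 ∧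
      (A (k + 1)).2 - (A k).2 = a (2 * k) * (B k).2 := by
    intro k
    cases k with
    | zero => rw [hA 0, hA0, hB0]; simp [hp0, hq0]
    | succ k =>
      rw [hA (k + 1), hA k, hB k]
      have h := hrec (2 * k)
      rw [show 2 * (k + 1) = 2 * k + 2 by ring]
      constructor
      · simp only [h.2]; ring
      · simp only [h.1]; ring
  have stepB : ∀ k, (B (k + 1)).1 - (B k).1 = a (2 * k + 1) * (A (k + 1)).1 ∧
      (B (k + 1)).2 - (B k).2 = a (2 * k + 1) * (A (k + 1)).2 := by
    intro k
    cases k with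
    | zero => rw [hB 0, hB0, hA 0]; simp [hp0, hq0, hp1, hq1]
    | succ k =>
      rw [hB (k + 1), hB k, hA (k + 1)]
      have h := hrec (2 * k + 1)
      rw [show 2 * (k + 1) + 1 = 2 * k + 1 + 2 by ring, show 2 * (k + 1) = 2 * k + 1 + 1 by ring]
      constructor
      · simp only [h.2]; ring
      · simp only [h.1]; ring
  have detAB' : ∀ k, det2 (A k) (B k) = 1 → det2 (A (k + 1)) (B k) = 1 := by
    intro k h
    have e1 : (A (k + 1)).1 = (A k).1 + a (2 * k) * (B k).1 := by linarith [(stepA k).1]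
    have e2 : (A (k + 1)).2 = (A k).2 + a (2 * k) * (B k).2 := by linarith [(stepA k).2]
    rw [← h]; unfold det2; rw [e1, e2]; ring
  have detAB : ∀ k, det2 (A k) (B k) = 1 := by
    intro k
    induction k with
    | zero => rw [hA0, hB0]; simp [det2]
    | succ k ih =>
      have h := detAB' k ih
      have e1 : (B (k + 1)).1 = (B k).1 + a (2 * k + 1) * (A (k + 1)).1 := by
        linarith [(stepB k).1]
      have e2 : (B (k + 1)).2 = (B k).2 + a (2 * k + 1) * (A (k + 1)).2 := by
        linarith [(stepB k).2]
      rw [← h]; unfold det2; rw [e1, e2]; ring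
  have dswap : ∀ u v : ℤ × ℤ, det2 u v ^ 2 = det2 v u ^ 2 := by
    intro u v; unfold det2; ring
  intro k
  constructor
  · exact lsin_eq _ _ _ (B k) (B (k + 1)) (A (k + 1)) _ _ _ (ha _) (ha _) (ha _)
      (stepA k).1 (stepA k).2 (stepA (k + 1)).1 (stepA (k + 1)).2 (stepB k).1 (stepB k).2
      (by rw [dswap, detAB' k (detAB k)]; norm_num)
  · exact lsin_eq _ _ _ (A (k + 1)) (A (k + 2)) (B (k + 1)) _ _ _ (ha _) (ha _) (ha _)
      (stepB k).1 (stepB k).2 (stepB (k + 1)).1 (stepB (k + 1)).2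
      (stepA (k + 1)).1 (stepA (k + 1)).2
      (by rw [detAB (k + 1)]; norm_num)
end
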